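/- B(P_4 □ P_4) = 5, i.e., the 4 × 4 grid graph has bodyguard number 5. -/

import Mathlib

open SimpleGraph

/-- A token may stay in place or move along an edge. -/
def stepRel {V : Type*} (G : SimpleGraph V) (x y : V) : Prop := x = y ∨ G.Adj x y

/-- The sequence of positions in the pursuit game: `(gamePlay ...) n` is the pair
(pursuer positions, evader position) after `n` full rounds; at time `0` the pursuers
have been placed (`binit`) and then the evader placed (`pinit binit`). In each round,
the pursuers move first (via `bmove`, seeing the current state), then the evader moves
(via `pmove`, seeing the pursuers' new positions and his own position). -/
def gamePlay {V : Type*} {k : ℕ} (binit : Fin k → V) (bmove : (Fin k → V) → V → Fin k → V)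
    (pinit : (Fin k → V) → V) (pmove : (Fin k → V) → V → V) : ℕ → (Fin k → V) × V
  | 0 => (binit, pinit binit)
  | n + 1 =>
      let s := gamePlay binit bmove pinit pmove n
      (bmove s.1 s.2, pmove (bmove s.1 s.2) s.2)

/-- `k` bodyguards have a winning strategy on `G`: they can place themselves and move so
that, against every president strategy, after finitely many rounds they occupy the whole
open neighbourhood of the president's vertex at the end of every bodyguard turn. -/
def BodyguardsWin {V : Type*} (G : SimpleGraph V) (k : ℕ) : Prop :=
  ∃ (binit : Fin k → V) (bmove : (Fin k → V) → V → Fin k → V),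
    (∀ bs p i, stepRel G (bs i) (bmove bs p i)) ∧
    ∀ (pinit : (Fin k → V) → V) (pmove : (Fin k → V) → V → V),
      (∀ bs p, stepRel G p (pmove bs p)) →
      ∃ N, ∀ n, N ≤ n →
        ∀ v, G.Adj (gamePlay binit bmove pinit pmove n).2 v →
          ∃ i, (gamePlay binit bmove pinit pmove (n + 1)).1 i = v

/-- The bodyguard number of a finite graph. -/
noncomputable def bodyguardNumber {V : Type*} (G : SimpleGraph V) [Fintype V] : ℕ :=
  sInf {k | BodyguardsWin G k}

/-- `k` cops have a winning strategy in classic Cops and Robber on `G`: at some point a cop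
occupies the same vertex as the robber (either right after a cop move, or at the end of a
round). -/
def CopsWin {V : Type*} (G : SimpleGraph V) (k : ℕ) : Prop :=
  ∃ (cinit : Fin k → V) (cmove : (Fin k → V) → V → Fin k → V),
    (∀ cs r i, stepRel G (cs i) (cmove cs r i)) ∧
    ∀ (rinit : (Fin k → V) → V) (rmove : (Fin k → V) → V → V),
      (∀ cs r, stepRel G r (rmove cs r)) →
      ∃ n i, (gamePlay cinit cmove rinit rmove (n + 1)).1 i =
                (gamePlay cinit cmove rinit rmove n).2 ∨
             (gamePlay cinit cmove rinit rmove n).1 i =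
                (gamePlay cinit cmove rinit rmove n).2

/-- The cop number of a finite graph. -/
noncomputable def copNumber {V : Type*} (G : SimpleGraph V) [Fintype V] : ℕ :=
  sInf {k | CopsWin G k}

/-!
Five guards suffice on every nonempty grid. On a path, the maps to the predecessor and to the
successor, with the respective end fixed, send edges to edges or single vertices. Applied to one
coordinate of the president they give four *shadows*, which move by the rules of the game and
cover his neighbourhood, and a guard who has reached a shadow can stay on it. While fewer than
four shadows are held, two guards are free, and they catch the next shadow: one first aligns
himself with it in the first coordinate, the other in the second. Whatever the shadow does, one of
them gets closer or reaches it, and the other loses no ground.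

Four guards fail as soon as there is a unit square all of whose vertices have degree four; the
president never leaves it. Suppose that he is at `p`, with neighbours `q` and `r` in the square, and
that each of `p`, `q`, `r` could be surrounded in one turn. As every guard is needed for that, all
guards are close to all three. The neighbours of `q` on the far sides from `p` and from `r` are then
within reach only of guards at `q` and at the reflection of `r` in `p`, and by symmetry guards
also stand at `r` and at the reflection of `q`: the president is already surrounded. Hence an
unsurrounded president always has a vertex of the square, his own or a neighbour, that the guards
cannot surround in their next turn.
-/

section Basic

variable {V W ι κ : Type*} {G : SimpleGraph V} {H : SimpleGraph W}

lemma stepRel_refl (G : SimpleGraph V) (x : V) : stepRel G x x :=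
  Or.inl rfl

lemma stepRel.map (f : G →g H) {x y : V} (h : stepRel G x y) : stepRel H (f x) (f y) :=
  h.imp (congrArg f) fun h => f.map_adj h

lemma stepRel_boxProd {x y : V × W} :
    stepRel (G □ H) x y ↔ stepRel G x.1 y.1 ∧ x.2 = y.2 ∨ x.1 = y.1 ∧ stepRel H x.2 y.2 := by
  simp only [stepRel, boxProd_adj, Prod.ext_iff]
  tauto

lemma stepRel_hasse {α : Type*} [PartialOrder α] {a b : α} :
    stepRel (hasse α) a b ↔ a ⩿ b ∨ b ⩿ a := by
  simp only [stepRel, hasse_adj, wcovBy_iff_covBy_or_eq, eq_comm (a := b)]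
  tauto

lemma stepRel_extend {e : κ → ι} (he : e.Injective) {bs : ι → V} {cs : κ → V}
    (h : ∀ a, stepRel G (bs (e a)) (cs a)) (i : ι) : stepRel G (bs i) (e.extend cs bs i) := by
  by_cases hi : ∃ a, e a = i
  · obtain ⟨a, rfl⟩ := hi
    simpa only [he.extend_apply] using h a
  · simpa only [Function.extend_apply' _ _ _ hi] using stepRel_refl G _

/-- The guards at `bs` occupy the whole open neighbourhood of `p`. -/
def Surrounds (G : SimpleGraph V) (bs : ι → V) (p : V) : Prop :=
  ∀ v, G.Adj p v → ∃ i, bs i = v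

/-- The guards at `bs` can surround `p` in a single turn. -/
def CanSurround (G : SimpleGraph V) (bs : ι → V) (p : V) : Prop :=
  ∃ bs' : ι → V, (∀ i, stepRel G (bs i) (bs' i)) ∧ Surrounds G bs' p

lemma CanSurround.map {bs : ι → V} {p : V} (h : CanSurround G bs p) (f : G ↪g H)
    (hf : H.neighborSet (f p) ⊆ Set.range f) : CanSurround H (f ∘ bs) (f p) := by
  obtain ⟨bs', hstep, hs⟩ := h
  refine ⟨f ∘ bs', fun i => (hstep i).map f.toHom, fun w hw => ?_⟩
  obtain ⟨v, rfl⟩ := hf hw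
  obtain ⟨i, rfl⟩ := hs v (f.map_adj_iff.1 hw)
  exact ⟨i, rfl⟩

lemma Surrounds.of_map {bs : ι → V} {p : V} (f : G ↪g H) (h : Surrounds H (f ∘ bs) (f p)) :
    Surrounds G bs p :=
  fun v hv => (h (f v) (f.map_adj_iff.2 hv)).imp fun _ hi => f.injective hi

lemma CanSurround.exists_bijective [Finite ι] {bs : ι → V} {p : V} (h : CanSurround G bs p)
    (hι : Nat.card ι ≤ (G.neighborSet p).ncard) :
    ∃ τ : G.neighborSet p → ι, τ.Bijective ∧ ∀ v, stepRel G (bs (τ v)) v := by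
  obtain ⟨bs', hstep, hs⟩ := h
  choose τ hτ using fun v : G.neighborSet p => hs v v.2
  have hinj : τ.Injective := fun v w hvw => Subtype.ext <| by rw [← hτ v, ← hτ w, hvw]
  exact ⟨τ, hinj.bijective_of_nat_card_le hι, fun v => hτ v ▸ hstep (τ v)⟩

/-- The pursuers, having just moved to `bs` against an evader at `p`, can enforce the condition `C`
at the end of some later (or the present) pursuer turn. -/
inductive Forces (G : SimpleGraph V) (C : (ι → V) → V → Prop) : (ι → V) → V → Prop
  | of {bs p} (h : C bs p) : Forces G C bs p
  | move {bs p} (reply : V → ι → V) (hstep : ∀ p' i, stepRel G p p' → stepRel G (bs i) (reply p' i))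
      (h : ∀ p', stepRel G p p' → Forces G C (reply p') p') : Forces G C bs p

lemma Forces.of_exists_reply {C : (ι → V) → V → Prop} {bs : ι → V} {p : V}
    (h : ∀ p', stepRel G p p' → ∃ bs', (∀ i, stepRel G (bs i) (bs' i)) ∧ Forces G C bs' p') :
    Forces G C bs p := by
  have : Nonempty (ι → V) := ⟨bs⟩
  choose! reply hreply using h
  exact .move reply (fun p' i hp => (hreply p' hp).1 i) fun p' hp => (hreply p' hp).2

lemma Forces.trans {C D : (ι → V) → V → Prop} (hCD : ∀ bs p, C bs p → Forces G D bs p)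
    {bs : ι → V} {p : V} (h : Forces G C bs p) : Forces G D bs p := by
  induction h with
  | of h => exact hCD _ _ h
  | move reply hstep _ ih => exact .move reply hstep ih

/-- The pursuers can enforce `C` within `n` rounds; the bounded form of `Forces`. -/
def ForcesWithin (G : SimpleGraph V) (C : (ι → V) → V → Prop) : ℕ → (ι → V) → V → Prop
  | 0, bs, p => C bs p
  | n + 1, bs, p => C bs p ∨ ∀ p', stepRel G p p' →
      ∃ bs', (∀ i, stepRel G (bs i) (bs' i)) ∧ ForcesWithin G C n bs' p'

lemma ForcesWithin.of {C : (ι → V) → V → Prop} {bs : ι → V} {p : V} (h : C bs p) (n : ℕ) :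
    ForcesWithin G C n bs p := by
  cases n with
  | zero => exact h
  | succ n => exact .inl h

lemma ForcesWithin.mono {C : (ι → V) → V → Prop} {n m : ℕ} (hnm : n ≤ m) {bs : ι → V} {p : V}
    (h : ForcesWithin G C n bs p) : ForcesWithin G C m bs p := by
  induction n generalizing m bs p with
  | zero => exact .of h m
  | succ n ih =>
    obtain ⟨m, rfl⟩ := Nat.exists_eq_add_of_le' (Nat.le_of_add_left_le hnm)
    refine h.imp_right fun h p' hp => ?_
    obtain ⟨bs', hstep, h⟩ := h p' hp
    exact ⟨bs', hstep, ih (by omega) h⟩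

lemma Forces.exists_forcesWithin [Finite V] {C : (ι → V) → V → Prop} {bs : ι → V} {p : V}
    (h : Forces G C bs p) : ∃ n, ForcesWithin G C n bs p := by
  induction h with
  | of h => exact ⟨0, h⟩
  | move reply hstep _ ih =>
    choose! n hn using ih
    obtain ⟨N, hN⟩ := (Set.finite_range n).bddAbove
    exact ⟨N + 1, .inr fun p' hp =>
      ⟨reply p', fun i => hstep p' i hp, (hn p' hp).mono (hN ⟨p', rfl⟩)⟩⟩

-- The strategy may not depend on where the evader came from, so it minimizes, over all moves, the
-- number of rounds left at the resulting position.
lemma exists_strategy_of_forcesWithin {C : (ι → V) → V → Prop}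
    (h_keep : ∀ bs p p', C bs p → stepRel G p p' →
      ∃ bs' : ι → V, (∀ i, stepRel G (bs i) (bs' i)) ∧ C bs' p') :
    ∃ move : (ι → V) → V → ι → V, (∀ bs p i, stepRel G (bs i) (move bs p i)) ∧
      ∀ n bs p p', ForcesWithin G C n bs p → stepRel G p p' →
        ForcesWithin G C (n - 1) (move bs p') p' := by
  classical
  have h_best : ∀ (bs : ι → V) p', ∃ bs', (∀ i, stepRel G (bs i) (bs' i)) ∧
      ∀ m cs, (∀ i, stepRel G (bs i) (cs i)) → ForcesWithin G C m cs p' →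
        ForcesWithin G C m bs' p' := by
    intro bs p'
    by_cases h : ∃ m cs, (∀ i, stepRel G (bs i) (cs i)) ∧ ForcesWithin G C m cs p'
    · obtain ⟨bs', hstep, hbs'⟩ := Nat.find_spec h
      exact ⟨bs', hstep, fun m cs hcs hm => hbs'.mono (Nat.find_min' h ⟨cs, hcs, hm⟩)⟩
    · exact ⟨bs, fun i => stepRel_refl G _, fun m cs hcs hm => absurd ⟨m, cs, hcs, hm⟩ h⟩
  choose move hstep hmove using h_best
  refine ⟨move, hstep, fun n bs p p' h hp => ?_⟩
  suffices ∃ cs, (∀ i, stepRel G (bs i) (cs i)) ∧ ForcesWithin G C (n - 1) cs p' by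
    obtain ⟨cs, hcs, h⟩ := this
    exact hmove bs p' _ cs hcs h
  have h_stay (h : C bs p) :
      ∃ cs, (∀ i, stepRel G (bs i) (cs i)) ∧ ForcesWithin G C (n - 1) cs p' :=
    (h_keep bs p p' h hp).imp fun _ h => h.imp_right fun h => .of h _
  cases n with
  | zero => exact h_stay h
  | succ n => exact h.elim h_stay fun h => h p' hp

theorem bodyguardsWin_of_forces [Finite V] {k : ℕ} {C : (Fin k → V) → V → Prop}
    (h_surrounds : ∀ bs p, C bs p → Surrounds G bs p)
    (h_keep : ∀ bs p p', C bs p → stepRel G p p' →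
      ∃ bs' : Fin k → V, (∀ i, stepRel G (bs i) (bs' i)) ∧ C bs' p')
    {binit : Fin k → V} (h_forces : ∀ p, Forces G C binit p) : BodyguardsWin G k := by
  obtain ⟨bmove, hstep, hbmove⟩ := exists_strategy_of_forcesWithin h_keep
  refine ⟨binit, bmove, hstep, fun pinit pmove hpmove => ?_⟩
  let play := gamePlay binit bmove pinit pmove
  obtain ⟨N, hN⟩ := (h_forces (pinit binit)).exists_forcesWithin
  have h_play : ∀ n, ForcesWithin G C (N - n) (play (n + 1)).1 (play n).2 := by
    intro n
    induction n with
    | zero => exact (hbmove N _ _ _ hN (stepRel_refl G _)).mono (Nat.sub_le N 1)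
    | succ n ih => exact hbmove _ _ _ _ ih (hpmove _ _)
  refine ⟨N, fun n hn => h_surrounds _ _ ?_⟩
  have h := h_play n
  rwa [Nat.sub_eq_zero_of_le hn] at h

theorem not_bodyguardsWin_of_evasion {k : ℕ} (P : V → Prop)
    (h_start : ∀ bs : Fin k → V, ∃ p, P p ∧ ¬ CanSurround G bs p)
    (h_move : ∀ (bs : Fin k → V) p, P p → ¬ Surrounds G bs p →
      ∃ p', stepRel G p p' ∧ P p' ∧ ¬ CanSurround G bs p') :
    ¬ BodyguardsWin G k := by
  rintro ⟨binit, bmove, hbmove, hwin⟩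
  have h_total : ∀ (bs : Fin k → V) p, ∃ p', stepRel G p p' ∧
      (P p → ¬ Surrounds G bs p → P p' ∧ ¬ CanSurround G bs p') := by
    intro bs p
    by_cases h : P p ∧ ¬ Surrounds G bs p
    · obtain ⟨p', hp', h'⟩ := h_move bs p h.1 h.2
      exact ⟨p', hp', fun _ _ => h'⟩
    · exact ⟨p, stepRel_refl G p, fun hP hs => absurd ⟨hP, hs⟩ h⟩
  choose pinit hpinit using h_start
  choose pmove hstep hpmove using h_total
  let play := gamePlay binit bmove pinit pmove
  have h_play : ∀ n, P (play n).2 ∧ ¬ CanSurround G (play n).1 (play n).2 := by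
    intro n
    induction n with
    | zero => exact hpinit binit
    | succ n ih => exact hpmove _ _ ih.1 fun h => ih.2 ⟨_, hbmove _ _, h⟩
  obtain ⟨N, hN⟩ := hwin pinit pmove hstep
  exact (h_play N).2 ⟨_, hbmove _ _, hN N le_rfl⟩

end Basic

section Shadows

variable {V W ι κ κ' : Type*} {G : SimpleGraph V} {H : SimpleGraph W}

/-- A family of self-maps of `G`, each sending edges to edges or single vertices, such that every
neighbour of a vertex `p` is the image of `p`, its *shadow*, under one of them. Guards who pursue
the shadows play Cops and Robber. -/
structure IsShadowFamily (G : SimpleGraph V) (f : κ → V → V) : Prop where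
  stepRel_map : ∀ a {p q}, stepRel G p q → stepRel G (f a p) (f a q)
  exists_eq : ∀ {p v}, G.Adj p v → ∃ a, f a p = v

lemma IsShadowFamily.boxProd {f : κ → V → V} {g : κ' → W → W} (hf : IsShadowFamily G f)
    (hg : IsShadowFamily H g) : IsShadowFamily (G □ H)
      (Sum.elim (fun a => Prod.map (f a) id) (fun b => Prod.map id (g b))) where
  stepRel_map := by
    simp only [stepRel_boxProd]
    rintro (a | b) p q (⟨h₁, h₂⟩ | ⟨h₁, h₂⟩)
    · exact .inl ⟨hf.stepRel_map a h₁, h₂⟩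
    · exact .inr ⟨congrArg (f a) h₁, h₂⟩
    · exact .inl ⟨h₁, congrArg (g b) h₂⟩
    · exact .inr ⟨h₁, hg.stepRel_map b h₂⟩
  exists_eq {p v} := by
    rintro (⟨h, h_eq⟩ | ⟨h, h_eq⟩)
    · obtain ⟨a, ha⟩ := hf.exists_eq h
      exact ⟨.inl a, Prod.ext ha h_eq⟩
    · obtain ⟨b, hb⟩ := hg.exists_eq h
      exact ⟨.inr b, Prod.ext h_eq hb⟩

lemma isShadowFamily_hasse {α : Type*} [LinearOrder α] [SuccOrder α] [PredOrder α] :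
    IsShadowFamily (hasse α) (fun b : Bool => cond b Order.succ Order.pred) where
  stepRel_map := by
    have h_succ {a b : α} (h : a ⩿ b) : Order.succ a ⩿ Order.succ b := by
      rcases h.covBy_or_eq with h | rfl
      · exact h.succ_eq ▸ Order.wcovBy_succ b
      · exact .rfl
    have h_pred {a b : α} (h : a ⩿ b) : Order.pred a ⩿ Order.pred b := by
      rcases h.covBy_or_eq with h | rfl
      · exact h.pred_eq ▸ Order.pred_wcovBy a
      · exact .rfl
    simp only [stepRel_hasse]
    rintro (_ | _) a b h
    · exact h.imp h_pred h_pred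
    · exact h.imp h_succ h_succ
  exists_eq h := h.elim (fun h => ⟨true, h.succ_eq⟩) (fun h => ⟨false, h.pred_eq⟩)

/-- Different pursuers stand on the shadows of `p` under the members of `f` indexed by `s`. -/
def HoldsShadows (f : κ → V → V) (s : Finset κ) (bs : ι → V) (p : V) : Prop :=
  ∃ e : s → ι, e.Injective ∧ ∀ a, bs (e a) = f a p

/-- Some pursuer stands on `t`. -/
def Captures (bs : ι → V) (t : V) : Prop := ∃ i, bs i = t

lemma HoldsShadows.insert [DecidableEq κ] {f : κ → V → V} {s : Finset κ} {a : κ} (ha : a ∉ s)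
    {e : s → ι} (he : e.Injective) {bs : ι → V} {p : V} (hbs : ∀ b, bs (e b) = f b p) {i : ι}
    (hi : ∀ b, e b ≠ i) (hbi : bs i = f a p) : HoldsShadows f (insert a s) bs p := by
  let σ := Finset.subtypeInsertEquivOption ha
  have h_comp : ∀ o : Option s, bs (o.elim i e) = f (σ.symm o) p
    | none => hbi
    | some b => hbs b
  have h_inj : Function.Injective fun o : Option s => o.elim i e := by
    rintro (_ | b) (_ | c) h
    · rfl
    · exact absurd h.symm (hi c)
    · exact absurd h (hi b)
    · exact congrArg some (he h)
  exact ⟨_, h_inj.comp σ.injective, fun b => by simpa using h_comp (σ b)⟩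

lemma forces_holdsShadows_insert [DecidableEq κ] {ι' : Type*} {f : κ → V → V}
    (hf : IsShadowFamily G f) {s : Finset κ} {a : κ} (ha : a ∉ s) {e : s → ι} {g : ι' → ι}
    (heg : (Sum.elim e g).Injective) {bs : ι → V} {p : V} (hbs : ∀ b, bs (e b) = f b p)
    (h : Forces G Captures (bs ∘ g) (f a p)) :
    Forces G (HoldsShadows f (insert a s)) bs p := by
  generalize hcs : bs ∘ g = cs at h
  generalize ht : f a p = t at h
  induction h generalizing bs p with
  | of h =>
    subst hcs ht
    obtain ⟨i, hi⟩ := h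
    exact .of <| .insert ha (heg.comp Sum.inl_injective) hbs
      (fun b h => Sum.inl_ne_inr (heg h)) hi
  | move reply hstep _ ih =>
    subst hcs ht
    refine .of_exists_reply fun p' hp => ?_
    have hp' := hf.stepRel_map a hp
    let cs := Sum.elim (fun b : s => f b p') (reply (f a p'))
    have h_extend (x : s ⊕ ι') : (Sum.elim e g).extend cs bs (Sum.elim e g x) = cs x :=
      heg.extend_apply cs bs x
    refine ⟨_, stepRel_extend heg (cs := cs) ?_,
      ih _ hp' (fun b => h_extend (.inl b)) (funext fun i => h_extend (.inr i)) rfl⟩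
    rintro (b | i)
    · exact (hbs b).symm ▸ hf.stepRel_map b hp
    · exact hstep _ i hp'

lemma HoldsShadows.exists_step {f : κ → V → V} (hf : IsShadowFamily G f)
    {s : Finset κ} {bs : ι → V} {p p' : V} (h : HoldsShadows f s bs p) (hp : stepRel G p p') :
    ∃ bs' : ι → V, (∀ i, stepRel G (bs i) (bs' i)) ∧ HoldsShadows f s bs' p' := by
  obtain ⟨e, he, hbs⟩ := h
  refine ⟨e.extend (fun a => f a p') bs, stepRel_extend he fun a => ?_, e, he,
    he.extend_apply _ bs⟩
  exact (hbs a).symm ▸ hf.stepRel_map a hp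

lemma exists_injective_sum_elim {s : Type*} [Fintype s] [Fintype ι] [Fintype κ] {e : s → ι}
    (he : e.Injective) (h : Fintype.card s + Fintype.card κ ≤ Fintype.card ι) :
    ∃ g : κ → ι, (Sum.elim e g).Injective := by
  classical
  have h_card : Fintype.card κ ≤ Fintype.card ↥(Set.range e)ᶜ := by
    rw [Fintype.card_compl_set, Set.card_range_of_injective he]
    omega
  obtain ⟨g⟩ := Function.Embedding.nonempty_of_card_le h_card
  exact ⟨fun a => g a, he.sumElim (Subtype.val_injective.comp g.injective)
    fun a b h => (g b).2 ⟨a, h⟩⟩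

lemma forces_holdsShadows [Fintype κ] [Fintype ι] {c : ℕ} {f : κ → V → V}
    (hf : IsShadowFamily G f) (hι : Fintype.card ι = Fintype.card κ + c)
    (h_cops : ∀ (cs : Fin (c + 1) → V) t, Forces G Captures cs t) (s : Finset κ) (bs : ι → V)
    (p : V) : Forces G (HoldsShadows f s) bs p := by
  classical
  induction s using Finset.induction_on generalizing bs p with
  | empty => exact .of ⟨isEmptyElim, Function.injective_of_subsingleton _, isEmptyElim⟩
  | insert a s ha ih =>
    refine (ih bs p).trans fun bs p h => ?_
    obtain ⟨e, he, hbs⟩ := h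
    have h_lt : s.card < Fintype.card κ := Finset.card_lt_univ_of_notMem ha
    obtain ⟨g, heg⟩ := exists_injective_sum_elim (κ := Fin (c + 1)) he
      (by simp only [Fintype.card_coe, Fintype.card_fin]; omega)
    exact forces_holdsShadows_insert hf ha heg hbs (h_cops _ _)

theorem bodyguardsWin_of_isShadowFamily [Finite V] [Nonempty V] [Fintype κ] {c : ℕ}
    {f : κ → V → V} (hf : IsShadowFamily G f)
    (h_cops : ∀ (cs : Fin (c + 1) → V) t, Forces G Captures cs t) :
    BodyguardsWin G (Fintype.card κ + c) := by
  refine bodyguardsWin_of_forces (C := HoldsShadows f Finset.univ) (fun bs p h v hv => ?_)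
    (fun bs p p' h hp => h.exists_step hf hp) (binit := fun _ => Classical.arbitrary V)
    (forces_holdsShadows hf (Fintype.card_fin _) h_cops _ _)
  obtain ⟨e, -, hbs⟩ := h
  obtain ⟨a, rfl⟩ := hf.exists_eq hv
  exact ⟨_, hbs ⟨a, Finset.mem_univ a⟩⟩

end Shadows

section Pursuit

variable {V W : Type*} {G : SimpleGraph V} {H : SimpleGraph W}

/-- Positions of a pursuer `a` and an evader `x`, at the end of a pursuer turn, are ranked so that
the pursuer can in each round lower the rank or capture the evader. -/
def IsCaptureRank (G : SimpleGraph V) (r : V → V → ℕ) : Prop :=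
  ∀ a {x x'}, stepRel G x x' → ∃ a', stepRel G a a' ∧ (a' = x' ∨ r a' x' < r a x)

lemma isCaptureRank_pathGraph (n : ℕ) :
    IsCaptureRank (pathGraph n) (fun a x => if a < x then n - a else a) := by
  intro a x x' hx
  simp only [stepRel, pathGraph_adj, Fin.ext_iff, Fin.lt_def] at hx ⊢
  rcases lt_trichotomy (a : ℕ) x' with h | h | h
  · refine ⟨⟨a + 1, by omega⟩, by simp, ?_⟩
    grind
  · exact ⟨a, .inl rfl, .inl h⟩
  · refine ⟨⟨a - 1, by omega⟩, by simp only; omega, ?_⟩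
    grind

lemma exists_adj_dist_add_one_le (hG : G.Connected) {a x : V} (h : a ≠ x) :
    ∃ b, G.Adj a b ∧ G.dist b x + 1 ≤ G.dist a x := by
  obtain ⟨w, hw⟩ := hG.exists_walk_length_eq_dist a x
  cases w with
  | nil => exact absurd rfl h
  | cons hab w => exact ⟨_, hab, hw ▸ Nat.succ_le_succ (dist_le w)⟩

lemma dist_le_of_stepRel (hG : G.Connected) {a x x' : V} (h : stepRel G x x') :
    G.dist a x' ≤ G.dist a x + 1 := by
  rcases h with rfl | h
  · exact Nat.le_succ _
  · exact hG.dist_triangle.trans_eq (congrArg _ (dist_eq_one_iff_adj.2 h))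

/-- The rank of a pursuer on `G □ H` who first reaches the evader's `G`-coordinate, and then, while
staying there, chases him along `H`. -/
noncomputable def alignRank (G : SimpleGraph V) (r : W → W → ℕ) (c t : V × W) : ℕ ×ₗ ℕ :=
  toLex (G.dist c.1 t.1, r c.2 t.2)

lemma exists_alignRank_le (hG : G.Connected) {r : W → W → ℕ} (hr : IsCaptureRank H r)
    (c : V × W) {t t' : V × W} (ht : stepRel (G □ H) t t') :
    ∃ c', stepRel (G □ H) c c' ∧ (c' = t' ∨ alignRank G r c' t' ≤ alignRank G r c t ∧
      (t.1 = t'.1 → alignRank G r c' t' < alignRank G r c t)) := by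
  obtain ⟨a, b⟩ := c
  obtain ⟨x, y⟩ := t
  obtain ⟨x', y'⟩ := t'
  by_cases ha : a = x'
  · subst ha
    by_cases hx : a = x
    · subst hx
      have hy : stepRel H y y' := by
        rcases stepRel_boxProd.1 ht with ⟨-, rfl⟩ | ⟨-, h⟩
        exacts [stepRel_refl H y, h]
      obtain ⟨b', hb, h⟩ := hr b hy
      refine ⟨(a, b'), stepRel_boxProd.2 (.inr ⟨rfl, hb⟩), h.imp (congrArg _) fun h => ?_⟩
      have h_lt : alignRank G r (a, b') (a, y') < alignRank G r (a, b) (a, y) :=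
        Prod.Lex.toLex_lt_toLex.2 (.inr ⟨rfl, h⟩)
      exact ⟨h_lt.le, fun _ => h_lt⟩
    · have h_lt : alignRank G r (a, b) (a, y') < alignRank G r (a, b) (x, y) :=
        Prod.Lex.toLex_lt_toLex.2 (.inl (by simpa using hG.pos_dist_of_ne hx))
      exact ⟨_, stepRel_refl _ _, .inr ⟨h_lt.le, fun _ => h_lt⟩⟩
  · obtain ⟨a', ha', h_dist⟩ := exists_adj_dist_add_one_le hG ha
    refine ⟨(a', b), stepRel_boxProd.2 (.inl ⟨.inr ha', rfl⟩), .inr ?_⟩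
    have h_lt (hx : x = x') : alignRank G r (a', b) (x', y') < alignRank G r (a, b) (x, y) :=
      Prod.Lex.toLex_lt_toLex.2 (.inl (hx ▸ h_dist))
    refine ⟨?_, h_lt⟩
    rcases stepRel_boxProd.1 ht with ⟨hx, rfl⟩ | ⟨hx, -⟩
    · have h_le : G.dist a' x' ≤ G.dist a x :=
        Nat.le_of_succ_le_succ (h_dist.trans (dist_le_of_stepRel hG hx))
      exact Prod.Lex.toLex_le_toLex'.2 ⟨h_le, fun _ => le_rfl⟩
    · exact (h_lt hx).le

theorem forces_captures_boxProd (hG : G.Connected) (hH : H.Connected) {r : V → V → ℕ}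
    {s : W → W → ℕ} (hr : IsCaptureRank G r) (hs : IsCaptureRank H s) (cs : Fin 2 → V × W)
    (t : V × W) : Forces (G □ H) Captures cs t := by
  induction h : (alignRank G s (cs 0) t, alignRank H r (cs 1).swap t.swap)
    using WellFoundedLT.induction generalizing cs t with
  | ind ρ ih =>
    subst h
    refine .of_exists_reply fun t' ht => ?_
    have ht_swap : stepRel (H □ G) t.swap t'.swap := ht.map (boxProdComm G H).toHom
    obtain ⟨c, hc, h₀⟩ := exists_alignRank_le hG hs (cs 0) ht
    obtain ⟨d, hd, h₁⟩ := exists_alignRank_le hH hr (cs 1).swap ht_swap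
    refine ⟨![c, d.swap], Fin.forall_fin_two.2 ⟨hc, hd.map (boxProdComm H G).toHom⟩, ?_⟩
    rcases h₀ with rfl | ⟨h₀_le, h₀_lt⟩
    · exact .of ⟨0, rfl⟩
    rcases h₁ with rfl | ⟨h₁_le, h₁_lt⟩
    · exact .of ⟨1, rfl⟩
    refine ih _ ?_ _ _ rfl
    rcases stepRel_boxProd.1 ht with ⟨-, h⟩ | ⟨h, -⟩
    · exact Prod.mk_lt_mk_of_le_of_lt h₀_le (h₁_lt h)
    · exact Prod.mk_lt_mk_of_lt_of_le (h₀_lt h) h₁_le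

theorem bodyguardsWin_pathGraph_boxProd (m n : ℕ) :
    BodyguardsWin (pathGraph (m + 1) □ pathGraph (n + 1)) 5 :=
  bodyguardsWin_of_isShadowFamily (c := 1) (isShadowFamily_hasse.boxProd isShadowFamily_hasse)
    (forces_captures_boxProd (pathGraph_connected m) (pathGraph_connected n)
      (isCaptureRank_pathGraph _) (isCaptureRank_pathGraph _))

end Pursuit

section Lattice

/-- The graph of the square lattice: the Hasse diagram of `ℤ × ℤ` joins points at distance one. -/
noncomputable abbrev lattice : SimpleGraph (ℤ × ℤ) := hasse (ℤ × ℤ)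

/-- The taxicab distance of `ℤ × ℤ`, which is the graph distance of the lattice. -/
def taxicab (x y : ℤ × ℤ) : ℕ := (x.1 - y.1).natAbs + (x.2 - y.2).natAbs

lemma lattice_adj {x y : ℤ × ℤ} : lattice.Adj x y ↔ taxicab x y = 1 := by
  simp only [hasse_prod, boxProd_adj, hasse_adj, Order.covBy_iff_add_one_eq, taxicab]
  omega

lemma stepRel_lattice {x y : ℤ × ℤ} : stepRel lattice x y ↔ taxicab x y ≤ 1 := by
  simp only [stepRel, lattice_adj, Prod.ext_iff, taxicab]
  omega

lemma ncard_neighborSet_lattice (p : ℤ × ℤ) : (lattice.neighborSet p).ncard = 4 := by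
  have h : lattice.neighborSet p =
      {(p.1 + 1, p.2), (p.1 - 1, p.2), (p.1, p.2 + 1), (p.1, p.2 - 1)} := by
    ext v
    simp only [mem_neighborSet, lattice_adj, taxicab, Set.mem_insert_iff, Set.mem_singleton_iff,
      Prod.ext_iff]
    omega
  rw [h, Set.ncard_insert_of_notMem, Set.ncard_insert_of_notMem, Set.ncard_pair]
  all_goals
    simp only [Set.mem_insert_iff, Set.mem_singleton_iff, Prod.ext_iff, ne_eq]
    omega

section FourGuards

variable {ι : Type*} [Finite ι] {bs : ι → ℤ × ℤ} {p : ℤ × ℤ}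

lemma CanSurround.exists_bijective_lattice (h : CanSurround lattice bs p) (hι : Nat.card ι ≤ 4) :
    ∃ τ : lattice.neighborSet p → ι, τ.Bijective ∧ ∀ v, stepRel lattice (bs (τ v)) v :=
  h.exists_bijective (hι.trans_eq (ncard_neighborSet_lattice p).symm)

lemma CanSurround.taxicab_le_two (h : CanSurround lattice bs p) (hι : Nat.card ι ≤ 4) (i : ι) :
    taxicab (bs i) p ≤ 2 := by
  obtain ⟨τ, hτ, h_step⟩ := h.exists_bijective_lattice hι
  obtain ⟨v, rfl⟩ := hτ.surjective i
  have hv : taxicab p v = 1 := lattice_adj.1 v.2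
  have h_near : taxicab (bs (τ v)) v ≤ 1 := stepRel_lattice.1 (h_step v)
  simp only [taxicab] at *
  omega

-- The lattice is bipartite, so a guard on a neighbour of `p` cannot step to another one.
lemma CanSurround.eq_of_adj_of_eq (h : CanSurround lattice bs p) (hι : Nat.card ι ≤ 4) {i j : ι}
    (hi : lattice.Adj p (bs i)) (hij : bs i = bs j) : i = j := by
  obtain ⟨τ, hτ, h_step⟩ := h.exists_bijective_lattice hι
  have h_stay (v) (hv : lattice.Adj p (bs (τ v))) : bs (τ v) = v := by
    have h_adj : lattice.Adj p v := v.2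
    have h_near := h_step v
    simp only [stepRel_lattice, lattice_adj, taxicab, Prod.ext_iff] at *
    omega
  obtain ⟨v, rfl⟩ := hτ.surjective i
  obtain ⟨w, rfl⟩ := hτ.surjective j
  rw [Subtype.ext ((h_stay v hi).symm.trans (hij.trans (h_stay w (hij ▸ hi))))]

end FourGuards

/-- The lattice edges from `p` to `q` and from `p` to `r` are perpendicular. -/
structure IsRightAngle (p q r : ℤ × ℤ) : Prop where
  adj_left : lattice.Adj p q
  adj_right : lattice.Adj p r
  fst_ne : q.1 ≠ r.1
  snd_ne : q.2 ≠ r.2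

namespace IsRightAngle

variable {ι : Type*} [Finite ι] {bs : ι → ℤ × ℤ} {p q r x : ℤ × ℤ}

lemma symm (h : IsRightAngle p q r) : IsRightAngle p r q :=
  ⟨h.adj_right, h.adj_left, h.fst_ne.symm, h.snd_ne.symm⟩

lemma coordinates (h : IsRightAngle p q r) :
    (q.1 = p.1 + 1 ∨ q.1 = p.1 - 1) ∧ q.2 = p.2 ∧ r.1 = p.1 ∧ (r.2 = p.2 + 1 ∨ r.2 = p.2 - 1) ∨
    q.1 = p.1 ∧ (q.2 = p.2 + 1 ∨ q.2 = p.2 - 1) ∧ (r.1 = p.1 + 1 ∨ r.1 = p.1 - 1) ∧ r.2 = p.2 := by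
  obtain ⟨hq, hr, h₁, h₂⟩ := h
  rw [lattice_adj, taxicab] at hq hr
  omega

lemma eq_of_taxicab_le (h : IsRightAngle p q r) (hp : taxicab x p ≤ 2) (hr : taxicab x r ≤ 2)
    (hx : taxicab x (q + (q - p)) ≤ 1) : x = q := by
  simp only [taxicab, Prod.fst_add, Prod.snd_add, Prod.fst_sub, Prod.snd_sub, Prod.ext_iff] at *
  rcases h.coordinates with
    ⟨h₁ | h₁, h₂, h₃, h₄ | h₄⟩ | ⟨h₁, h₂ | h₂, h₃ | h₃, h₄⟩ <;>
    rw [h₁, h₂] at hx ⊢ <;> rw [h₃, h₄] at hr <;> clear h h₁ h₂ h₃ h₄ <;> omega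

lemma eq_or_eq_of_taxicab_le (h : IsRightAngle p q r) (hr : taxicab x r ≤ 2)
    (hx : taxicab x (q - (r - p)) ≤ 1) : x = q ∨ x = p - (r - p) := by
  simp only [taxicab, Prod.fst_sub, Prod.snd_sub, Prod.ext_iff] at *
  rcases h.coordinates with
    ⟨h₁ | h₁, h₂, h₃, h₄ | h₄⟩ | ⟨h₁, h₂ | h₂, h₃ | h₃, h₄⟩ <;>
    rw [h₁, h₂, h₃, h₄] at hx ⊢ <;> rw [h₃, h₄] at hr <;> clear h h₁ h₂ h₃ h₄ <;> omega

lemma eq_or_eq_of_adj (h : IsRightAngle p q r) (hx : lattice.Adj p x) :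
    x = q ∨ x = p - (r - p) ∨ x = r ∨ x = p - (q - p) := by
  simp only [lattice_adj, taxicab, Prod.fst_sub, Prod.snd_sub, Prod.ext_iff] at *
  rcases h.coordinates with
    ⟨h₁ | h₁, h₂, h₃, h₄ | h₄⟩ | ⟨h₁, h₂ | h₂, h₃ | h₃, h₄⟩ <;>
    rw [h₁, h₂, h₃, h₄] <;> clear h h₁ h₂ h₃ h₄ <;> omega

lemma exists_eq_left_and_exists_eq_opposite (h : IsRightAngle p q r) (hι : Nat.card ι ≤ 4)
    (hp : CanSurround lattice bs p) (hq : CanSurround lattice bs q)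
    (hr : CanSurround lattice bs r) : (∃ i, bs i = q) ∧ ∃ i, bs i = p - (r - p) := by
  obtain ⟨bs', h_step, h_surr⟩ := hq
  have h_beyond : lattice.Adj q (q + (q - p)) := by
    have := h.adj_left
    simp only [lattice_adj, taxicab, Prod.fst_add, Prod.snd_add, Prod.fst_sub, Prod.snd_sub] at *
    omega
  have h_beside : lattice.Adj q (q - (r - p)) := by
    have := h.adj_right
    simp only [lattice_adj, taxicab, Prod.fst_sub, Prod.snd_sub] at *
    omega
  have h_ne : q + (q - p) ≠ q - (r - p) := by
    rcases h.coordinates with h | h <;>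
      simp only [ne_eq, Prod.ext_iff, Prod.fst_add, Prod.snd_add, Prod.fst_sub, Prod.snd_sub] <;>
      omega
  obtain ⟨i, hi⟩ := h_surr _ h_beyond
  obtain ⟨j, hj⟩ := h_surr _ h_beside
  have hi_eq : bs i = q := h.eq_of_taxicab_le (hp.taxicab_le_two hι i) (hr.taxicab_le_two hι i)
    (stepRel_lattice.1 (hi ▸ h_step i))
  refine ⟨⟨i, hi_eq⟩, j, (h.eq_or_eq_of_taxicab_le (hr.taxicab_le_two hι j)
    (stepRel_lattice.1 (hj ▸ h_step j))).resolve_left fun hj_eq => ?_⟩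
  have hij : i = j := hp.eq_of_adj_of_eq hι (hi_eq ▸ h.adj_left) (hi_eq.trans hj_eq.symm)
  exact h_ne (by rw [← hi, ← hj, hij])

lemma surrounds (h : IsRightAngle p q r) (hι : Nat.card ι ≤ 4)
    (hp : CanSurround lattice bs p) (hq : CanSurround lattice bs q)
    (hr : CanSurround lattice bs r) : Surrounds lattice bs p := by
  obtain ⟨hq_mem, hr_opp⟩ := h.exists_eq_left_and_exists_eq_opposite hι hp hq hr
  obtain ⟨hr_mem, hq_opp⟩ := h.symm.exists_eq_left_and_exists_eq_opposite hι hp hr hq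
  intro v hv
  obtain rfl | rfl | rfl | rfl := h.eq_or_eq_of_adj hv <;> assumption

lemma not_canSurround_opposite (h : IsRightAngle p q r) (hι : Nat.card ι ≤ 4)
    (hp : CanSurround lattice bs p) (hq : CanSurround lattice bs q)
    (hr : CanSurround lattice bs r) : ¬ CanSurround lattice bs (q + (r - p)) := by
  intro hs
  obtain ⟨-, i, hi⟩ := h.exists_eq_left_and_exists_eq_opposite hι hp hq hr
  have h_le : taxicab (p - (r - p)) (q + (r - p)) ≤ 2 := hi ▸ hs.taxicab_le_two hι i
  have h_coordinates := h.coordinates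
  simp only [taxicab, Prod.fst_add, Prod.snd_add, Prod.fst_sub, Prod.snd_sub] at h_le
  omega

end IsRightAngle

lemma exists_isRightAngle {z p : ℤ × ℤ} (hp : p ∈ Set.Icc z (z + 1)) :
    ∃ q ∈ Set.Icc z (z + 1), ∃ r ∈ Set.Icc z (z + 1),
      IsRightAngle p q r ∧ q + (r - p) ∈ Set.Icc z (z + 1) := by
  refine ⟨(z.1 + (z + 1).1 - p.1, p.2), ?_, (p.1, z.2 + (z + 1).2 - p.2), ?_, ⟨?_, ?_, ?_, ?_⟩, ?_⟩
  all_goals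
    simp only [lattice_adj, taxicab, Set.mem_Icc, Prod.le_def, Prod.fst_add, Prod.snd_add,
      Prod.fst_sub, Prod.snd_sub, Prod.fst_one, Prod.snd_one] at *
    omega

theorem not_bodyguardsWin_of_embedding {V : Type*} {G : SimpleGraph V} (f : G ↪g lattice)
    {z : ℤ × ℤ} (hz : ∀ w ∈ Set.Icc z (z + 1), lattice.neighborSet w ⊆ Set.range f) {k : ℕ}
    (hk : k ≤ 4) : ¬ BodyguardsWin G k := by
  have hk' : Nat.card (Fin k) ≤ 4 := (Nat.card_fin k).trans_le hk
  have h_range {w} (hw : w ∈ Set.Icc z (z + 1)) : ∃ u, f u = w := by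
    obtain ⟨q, hq, _, _, h, _⟩ := exists_isRightAngle hw
    exact hz q hq h.adj_left.symm
  refine not_bodyguardsWin_of_evasion (fun p => f p ∈ Set.Icc z (z + 1)) (fun bs => ?_)
    fun bs p hp h_surr => ?_
  · by_contra! h_can
    have h_can_lattice {w} (hw : w ∈ Set.Icc z (z + 1)) : CanSurround lattice (f ∘ bs) w := by
      obtain ⟨u, rfl⟩ := h_range hw
      exact (h_can u hw).map f (hz _ hw)
    have hz_mem : z ∈ Set.Icc z (z + 1) := ⟨le_rfl, le_add_of_nonneg_right zero_le_one⟩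
    obtain ⟨q, hq, r, hr, h, hs⟩ := exists_isRightAngle hz_mem
    exact h.not_canSurround_opposite hk' (h_can_lattice hz_mem) (h_can_lattice hq)
      (h_can_lattice hr) (h_can_lattice hs)
  · by_contra! h_can
    have h_can_lattice {w} (hw : w ∈ Set.Icc z (z + 1)) (h_step : stepRel lattice (f p) w) :
        CanSurround lattice (f ∘ bs) w := by
      obtain ⟨u, rfl⟩ := h_range hw
      exact (h_can u (h_step.imp (fun h => f.injective h) f.map_adj_iff.1) hw).map f (hz _ hw)
    obtain ⟨q, hq, r, hr, h, -⟩ := exists_isRightAngle hp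
    exact h_surr <| .of_map f <| h.surrounds hk' (h_can_lattice hp (stepRel_refl _ _))
      (h_can_lattice hq (.inr h.adj_left)) (h_can_lattice hr (.inr h.adj_right))

/-- The `m × n` grid as the induced subgraph of the lattice on `{0, …, m - 1} × {0, …, n - 1}`. -/
noncomputable def pathGraphBoxProdEmbedding (m n : ℕ) :
    (pathGraph m □ pathGraph n) ↪g lattice where
  toFun u := (u.1, u.2)
  inj' u v h := by simpa [Prod.ext_iff, Fin.ext_iff] using h
  map_rel_iff' {u v} := by
    change lattice.Adj ((u.1 : ℤ), (u.2 : ℤ)) ((v.1 : ℤ), (v.2 : ℤ)) ↔ _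
    simp only [lattice_adj, taxicab, boxProd_adj, pathGraph_adj, Fin.ext_iff]
    omega

lemma mem_range_pathGraphBoxProdEmbedding {m n : ℕ} {w : ℤ × ℤ} (h₁ : 0 ≤ w.1) (h₁' : w.1 < m)
    (h₂ : 0 ≤ w.2) (h₂' : w.2 < n) : w ∈ Set.range (pathGraphBoxProdEmbedding m n) :=
  ⟨(⟨w.1.toNat, by omega⟩, ⟨w.2.toNat, by omega⟩),
    Prod.ext (Int.toNat_of_nonneg h₁) (Int.toNat_of_nonneg h₂)⟩

theorem not_bodyguardsWin_pathGraph_boxProd {m n k : ℕ} (hm : 4 ≤ m) (hn : 4 ≤ n) (hk : k ≤ 4) :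
    ¬ BodyguardsWin (pathGraph m □ pathGraph n) k := by
  refine not_bodyguardsWin_of_embedding (z := 1) (pathGraphBoxProdEmbedding m n)
    (fun w hw v hv => ?_) hk
  simp only [mem_neighborSet, lattice_adj, taxicab, Set.mem_Icc, Prod.le_def, Prod.fst_add,
    Prod.snd_add, Prod.fst_one, Prod.snd_one] at hw hv
  apply mem_range_pathGraphBoxProdEmbedding <;> omega

end Lattice

theorem bodyguardNumber_pathGraph_four_boxProd_general {m n : ℕ} (hm : 4 ≤ m) (hn : 4 ≤ n) :
    bodyguardNumber (pathGraph m □ pathGraph n) = 5 := by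
  have h_win : BodyguardsWin (pathGraph m □ pathGraph n) 5 := by
    obtain ⟨m, rfl⟩ := Nat.exists_eq_add_of_le' (Nat.one_le_of_lt hm)
    obtain ⟨n, rfl⟩ := Nat.exists_eq_add_of_le' (Nat.one_le_of_lt hn)
    exact bodyguardsWin_pathGraph_boxProd m n
  refine le_antisymm (Nat.sInf_le h_win) (le_csInf ⟨5, h_win⟩ fun k hk => ?_)
  by_contra! h_lt
  exact not_bodyguardsWin_pathGraph_boxProd hm hn (Nat.le_of_lt_succ h_lt) hk

/-- `B(P_4 □ P_4) = 5`: the `4 × 4` grid graph has bodyguard number `5`. -/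
theorem bodyguardNumber_pathGraph_four_boxProd :
    bodyguardNumber (SimpleGraph.pathGraph 4 □ SimpleGraph.pathGraph 4) = 5 :=
  bodyguardNumber_pathGraph_four_boxProd_general le_rfl le_rfl
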